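/- arXiv:1003.5316 — 3 statements merged into one kernel-verified Lean document; each statement's English description precedes it below -/
import Mathlib

section
/- Let A be a monic polynomial over 𝔽₂ with ω(A) = 2. Then A is unitary perfect if and only if A = (x²+x)^(2^n) = x^(2^n)(x+1)^(2^n) for some n ∈ ℕ. -/
/-!
A polynomial `A` with `ω(A) = 2` is `P ^ a * Q ^ b` with `P ≠ Q` irreducible and `a, b ≥ 1`, and its
unitary divisors are `1`, `P ^ a`, `Q ^ b` and `A` (`sigmaStar_two`). So `A` is unitary perfect iff
`1 + P ^ a + Q ^ b = 0`, which in characteristic two reads `P ^ a + Q ^ b = 1`.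

This equation is solved in `eq_two_pow_of_pow_add_pow_eq_one`. If both exponents are even, Frobenius
is injective and both can be halved. Otherwise one of them, say `a`, is odd. If `a > 1`, then
`Q ^ b = P ^ a - 1` is the product of `P - 1` and `1 + P + ⋯ + P ^ (a - 1)`, which are both
non-units and hence both divisible by `Q`; but modulo `P - 1` the second one is `a`, which is `1`.
So `a = 1`, and `P = Q ^ b - 1` is irreducible, which forces `b = 1`. Undoing the halvings, the
exponents are a common power of two and `P + Q = 1`. One of `P`, `Q` then vanishes at `0`, so it
is `X` and the other is `X + 1` (`eq_X_or_of_add_eq_one`).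
-/

open Polynomial
open scoped Classical

/-- The sum of all unitary divisors of `A`: monic divisors `d` of `A` with
`gcd(d, A/d) = 1`. -/
noncomputable def sigmaStar (A : Polynomial (ZMod 2)) : Polynomial (ZMod 2) :=
  ∑ᶠ d ∈ {d : Polynomial (ZMod 2) | d.Monic ∧ d ∣ A ∧ IsCoprime d (A / d)}, d

/-- `A` is unitary perfect if `σ*(A) = A`. -/
def UnitaryPerfect (A : Polynomial (ZMod 2)) : Prop :=
  sigmaStar A = A

/-- `ω(A)`: the number of distinct monic irreducible factors of `A`. -/
noncomputable def omega (A : Polynomial (ZMod 2)) : ℕ :=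
  (UniqueFactorizationMonoid.normalizedFactors A).toFinset.card

/-! ### Polynomials over the field with two elements -/

lemma monic_of_ne_zero_zmod2 {p : Polynomial (ZMod 2)} (hp : p ≠ 0) : p.Monic := by
  have h : ∀ c : ZMod 2, c ≠ 0 → c = 1 := by decide
  exact h _ (leadingCoeff_ne_zero.mpr hp)

lemma eq_one_of_isUnit_zmod2 {p : Polynomial (ZMod 2)} (hp : IsUnit p) : p = 1 :=
  (monic_of_ne_zero_zmod2 hp.ne_zero).eq_one_of_isUnit hp

lemma eq_of_dvd_dvd_zmod2 {p q : Polynomial (ZMod 2)} (hp : p ≠ 0)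
    (h1 : p ∣ q) (h2 : q ∣ p) : p = q :=
  eq_of_monic_of_associated (monic_of_ne_zero_zmod2 hp)
    (monic_of_ne_zero_zmod2 (fun h => hp (by simpa [h] using h2))) (associated_of_dvd_dvd h1 h2)

lemma two_eq_zero_zmod2 : (2 : Polynomial (ZMod 2)) = 0 := CharTwo.two_eq_zero

/-! ### Unitary divisors of a product of two prime powers -/

lemma unitary_dvd_two_iff {P Q : Polynomial (ZMod 2)} (hP : Irreducible P) (hQ : Irreducible Q)
    (hPQ : P ≠ Q) (a b : ℕ) (d : Polynomial (ZMod 2)) :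
    (d.Monic ∧ d ∣ P ^ a * Q ^ b ∧ IsCoprime d (P ^ a * Q ^ b / d)) ↔
      d = 1 ∨ d = P ^ a ∨ d = Q ^ b ∨ d = P ^ a * Q ^ b := by
  have hP0 : P ^ a ≠ 0 := pow_ne_zero _ hP.ne_zero
  have hQ0 : Q ^ b ≠ 0 := pow_ne_zero _ hQ.ne_zero
  have hcop : IsCoprime (P ^ a) (Q ^ b) := by
    apply IsCoprime.pow
    rw [hP.coprime_iff_not_dvd]
    intro h
    exact hPQ (eq_of_dvd_dvd_zmod2 hP.ne_zero h (hP.dvd_symm hQ h))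
  constructor
  · rintro ⟨hd, ⟨e, he⟩, hc⟩
    have hd0 : d ≠ 0 := hd.ne_zero
    rw [he, mul_div_cancel_left₀ _ hd0] at hc
    -- Each of the two prime powers lies entirely in `d` or entirely in the cofactor `e`.
    have key : ∀ R : Polynomial (ZMod 2), Irreducible R → ∀ k, R ^ k ∣ d * e →
        R ^ k ∣ d ∨ R ^ k ∣ e := by
      intro R hR k hk
      by_cases h : R ∣ d
      · left
        have h' : ¬ R ∣ e := fun h' => hR.not_isUnit (hc.isUnit_of_dvd' h h')
        exact hR.prime.pow_dvd_of_dvd_mul_right k h' hk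
      · exact Or.inr (hR.prime.pow_dvd_of_dvd_mul_left k h hk)
    have hdA : d ∣ P ^ a * Q ^ b := ⟨e, he⟩
    rcases key P hP a (he ▸ dvd_mul_right _ _) with h1 | h1 <;>
      rcases key Q hQ b (he ▸ dvd_mul_left _ _) with h2 | h2
    · exact Or.inr (Or.inr (Or.inr (eq_of_dvd_dvd_zmod2 hd0 hdA (hcop.mul_dvd h1 h2))))
    · have := (hc.of_isCoprime_of_dvd_right h2).dvd_of_dvd_mul_right hdA
      exact Or.inr (Or.inl (eq_of_dvd_dvd_zmod2 hd0 this h1))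
    · have := (hc.of_isCoprime_of_dvd_right h1).dvd_of_dvd_mul_left hdA
      exact Or.inr (Or.inr (Or.inl (eq_of_dvd_dvd_zmod2 hd0 this h2)))
    · have h := hc.of_isCoprime_of_dvd_right (hcop.mul_dvd h1 h2)
      exact Or.inl (eq_one_of_isUnit_zmod2 (h.isUnit_of_dvd' dvd_rfl hdA))
  · rintro (rfl | rfl | rfl | rfl)
    · exact ⟨monic_one, one_dvd _, isCoprime_one_left⟩
    · refine ⟨monic_of_ne_zero_zmod2 hP0, dvd_mul_right _ _, ?_⟩
      rwa [mul_div_cancel_left₀ _ hP0]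
    · refine ⟨monic_of_ne_zero_zmod2 hQ0, dvd_mul_left _ _, ?_⟩
      rw [mul_div_cancel_right₀ _ hQ0]
      exact hcop.symm
    · refine ⟨monic_of_ne_zero_zmod2 (mul_ne_zero hP0 hQ0), dvd_rfl, ?_⟩
      rw [EuclideanDomain.div_self (mul_ne_zero hP0 hQ0)]
      exact isCoprime_one_right

lemma sigmaStar_two {P Q : Polynomial (ZMod 2)} (hP : Irreducible P) (hQ : Irreducible Q)
    (hPQ : P ≠ Q) {a b : ℕ} (ha : a ≠ 0) (hb : b ≠ 0) :
    sigmaStar (P ^ a * Q ^ b) = 1 + P ^ a + Q ^ b + P ^ a * Q ^ b := by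
  have hset : {d : Polynomial (ZMod 2) | d.Monic ∧ d ∣ P ^ a * Q ^ b ∧
      IsCoprime d (P ^ a * Q ^ b / d)} =
      (({1, P ^ a, Q ^ b, P ^ a * Q ^ b} : Finset (Polynomial (ZMod 2))) :
        Set (Polynomial (ZMod 2))) := by
    ext d
    simp only [Set.mem_ofPred_eq, unitary_dvd_two_iff hP hQ hPQ, Finset.coe_insert,
      Finset.coe_singleton, Set.mem_insert_iff, Set.mem_singleton_iff]
  have hP0 : P ^ a ≠ 0 := pow_ne_zero _ hP.ne_zero
  have hQ0 : Q ^ b ≠ 0 := pow_ne_zero _ hQ.ne_zero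
  have hP1 : P ^ a ≠ 1 := fun h => hP.not_isUnit ((isUnit_pow_iff ha).1 (h ▸ isUnit_one))
  have hQ1 : Q ^ b ≠ 1 := fun h => hQ.not_isUnit ((isUnit_pow_iff hb).1 (h ▸ isUnit_one))
  have hne : P ^ a ≠ Q ^ b := by
    intro h
    have hd : P ∣ Q := hP.prime.dvd_of_dvd_pow (h ▸ dvd_pow_self P ha)
    exact hPQ (eq_of_dvd_dvd_zmod2 hP.ne_zero hd (hP.dvd_symm hQ hd))
  have hm1 : P ^ a * Q ^ b ≠ 1 := fun h => hP1 (eq_one_of_isUnit_zmod2 (.of_mul_eq_one _ h))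
  have hmP : P ^ a ≠ P ^ a * Q ^ b := fun h => hQ1 ((mul_eq_left₀ hP0).1 h.symm)
  have hmQ : Q ^ b ≠ P ^ a * Q ^ b := fun h => hP1 ((mul_eq_right₀ hQ0).1 h.symm)
  unfold sigmaStar
  rw [hset, finsum_mem_coe_finset, Finset.sum_insert, Finset.sum_insert, Finset.sum_insert,
    Finset.sum_singleton]
  · ring
  · simpa using hmQ
  · simpa using ⟨hne, fun h => hmP h⟩
  · simpa using ⟨hP1.symm, hQ1.symm, hm1.symm⟩

/-! ### The equation `P ^ a + Q ^ b = 1` -/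

lemma not_isUnit_sub_one_zmod2 {P : Polynomial (ZMod 2)} (hP : Irreducible P) :
    ¬ IsUnit (P - 1) := by
  intro h
  have := eq_one_of_isUnit_zmod2 h
  exact hP.ne_zero (by linear_combination this + two_eq_zero_zmod2)

lemma not_isUnit_geom_sum_zmod2 {P : Polynomial (ZMod 2)} (hP : Irreducible P) {n : ℕ}
    (hn : 2 ≤ n) : ¬ IsUnit (∑ i ∈ Finset.range n, P ^ i) := by
  intro h
  have h1 := geom_sum_mul P n
  rw [eq_one_of_isUnit_zmod2 h] at h1
  obtain ⟨m, rfl⟩ : ∃ m, n = m + 2 := ⟨n - 2, by omega⟩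
  have h2 : P * P ^ (m + 1) = P * 1 := by linear_combination -h1
  have h3 := mul_left_cancel₀ hP.ne_zero h2
  exact hP.not_isUnit ((isUnit_pow_iff (Nat.succ_ne_zero m)).1 (h3 ▸ isUnit_one))

/-- With an odd exponent no Frobenius twist is possible, so both exponents are `1`. -/
lemma exponents_eq_one_of_odd {P Q : Polynomial (ZMod 2)} (hP : Irreducible P)
    (hQ : Irreducible Q) {a b : ℕ} (ha : Odd a) (hb : b ≠ 0) (h : P ^ a + Q ^ b = 1) :
    a = 1 ∧ b = 1 := by
  have hgeom : (∑ i ∈ Finset.range a, P ^ i) * (P - 1) = Q ^ b := by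
    linear_combination geom_sum_mul P a + h - Q ^ b * two_eq_zero_zmod2
  have hQdvd : ∀ R : Polynomial (ZMod 2), ¬ IsUnit R → R ∣ Q ^ b → Q ∣ R := by
    intro R hR hd
    obtain ⟨i, -, hi⟩ := (dvd_prime_pow hQ.prime b).1 hd
    rcases Nat.eq_zero_or_pos i with rfl | hi0
    · exact absurd (hi.symm.isUnit (by simp)) hR
    · exact (dvd_pow_self Q hi0.ne').trans hi.symm.dvd
  have ha1 : a = 1 := by
    by_contra hne
    have ha2 : 2 ≤ a := by have := ha.pos; omega
    have h1 := hQdvd _ (not_isUnit_sub_one_zmod2 hP) (hgeom ▸ dvd_mul_left _ _)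
    have h2 := hQdvd _ (not_isUnit_geom_sum_zmod2 hP ha2) (hgeom ▸ dvd_mul_right _ _)
    have h3 : P - 1 ∣ ∑ i ∈ Finset.range a, (P ^ i - 1) :=
      Finset.dvd_sum fun i _ => by simpa using sub_dvd_pow_sub_pow P 1 i
    have h4 : Q ∣ (a : Polynomial (ZMod 2)) := by
      have := dvd_sub h2 (h1.trans h3)
      simpa [Finset.sum_sub_distrib] using this
    obtain ⟨k, rfl⟩ := ha
    apply hQ.not_isUnit
    apply isUnit_of_dvd_one
    simpa [two_eq_zero_zmod2] using h4
  refine ⟨ha1, ?_⟩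
  by_contra hne
  have hP' : P = (Q - 1) * ∑ i ∈ Finset.range b, Q ^ i := by
    rw [ha1] at h
    linear_combination h - geom_sum_mul Q b + (1 - Q ^ b) * two_eq_zero_zmod2
  rcases hP.isUnit_or_isUnit hP' with hu | hu
  · exact not_isUnit_sub_one_zmod2 hQ hu
  · exact not_isUnit_geom_sum_zmod2 hQ (by omega) hu

lemma eq_two_pow_of_pow_add_pow_eq_one {P Q : Polynomial (ZMod 2)} (hP : Irreducible P)
    (hQ : Irreducible Q) (a : ℕ) : ∀ b : ℕ, a ≠ 0 → b ≠ 0 → P ^ a + Q ^ b = 1 →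
      ∃ n : ℕ, a = 2 ^ n ∧ b = 2 ^ n ∧ P + Q = 1 := by
  induction a using Nat.strong_induction_on with
  | _ a ih =>
    intro b ha hb h
    rcases Nat.even_or_odd a with ⟨c, hc⟩ | hodd
    · rcases Nat.even_or_odd b with ⟨d, hd⟩ | hodd
      · have hsq : (P ^ c + Q ^ d - 1) ^ 2 = 0 := by
          rw [hc, hd, pow_add, pow_add] at h
          linear_combination h +
            (P ^ c * Q ^ d - P ^ c - Q ^ d + 1) * two_eq_zero_zmod2
        have h' : P ^ c + Q ^ d = 1 := sub_eq_zero.1 (pow_eq_zero_iff two_ne_zero |>.1 hsq)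
        obtain ⟨n, h1, h2, h3⟩ := ih c (by omega) d (by omega) (by omega) h'
        exact ⟨n + 1, by rw [pow_succ]; omega, by rw [pow_succ]; omega, h3⟩
      · obtain ⟨h1, h2⟩ := exponents_eq_one_of_odd hQ hP hodd ha (by rw [add_comm]; exact h)
        subst h1 h2
        exact ⟨0, rfl, rfl, by simpa using h⟩
    · obtain ⟨h1, h2⟩ := exponents_eq_one_of_odd hP hQ hodd hb h
      subst h1 h2
      exact ⟨0, rfl, rfl, by simpa using h⟩

lemma eq_X_or_of_add_eq_one {P Q : Polynomial (ZMod 2)} (hP : Irreducible P)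
    (hQ : Irreducible Q) (h : P + Q = 1) : (P = X ∧ Q = X + 1) ∨ (Q = X ∧ P = X + 1) := by
  have hX : ∀ R : Polynomial (ZMod 2), Irreducible R → R.eval 0 = 0 → R = X := by
    intro R hR h0
    have hd : X ∣ R := X_dvd_iff.2 (by rwa [coeff_zero_eq_eval_zero])
    exact eq_of_dvd_dvd_zmod2 hR.ne_zero (irreducible_X.dvd_symm hR hd) hd
  have hev : P.eval 0 + Q.eval 0 = 1 := by rw [← eval_add, h, eval_one]
  have hc : ∀ u v : ZMod 2, u + v = 1 → u = 0 ∨ v = 0 := by decide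
  rcases hc _ _ hev with h0 | h0
  · have hPX := hX P hP h0
    exact Or.inl ⟨hPX, by linear_combination h - hPX - X * two_eq_zero_zmod2⟩
  · have hQX := hX Q hQ h0
    exact Or.inr ⟨hQX, by linear_combination h - hQX - X * two_eq_zero_zmod2⟩

/-! ### Polynomials with two prime factors -/

lemma exists_eq_pow_mul_pow_of_omega_eq_two {A : Polynomial (ZMod 2)} (hM : A.Monic)
    (hw : omega A = 2) : ∃ (P Q : Polynomial (ZMod 2)) (a b : ℕ), Irreducible P ∧ Irreducible Q ∧
      P ≠ Q ∧ a ≠ 0 ∧ b ≠ 0 ∧ A = P ^ a * Q ^ b := by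
  unfold omega at hw
  obtain ⟨P, Q, hPQ, hs⟩ := Finset.card_eq_two.1 hw
  set s := UniqueFactorizationMonoid.normalizedFactors A with hsdef
  have hPs : P ∈ s := Multiset.mem_toFinset.1 (by rw [hs]; simp)
  have hQs : Q ∈ s := Multiset.mem_toFinset.1 (by rw [hs]; simp)
  have hprod : s.prod = P ^ s.count P * Q ^ s.count Q := by
    rw [Finset.prod_multiset_count, hs, Finset.prod_pair hPQ]
  have hassoc := UniqueFactorizationMonoid.prod_normalizedFactors hM.ne_zero
  refine ⟨P, Q, s.count P, s.count Q,
    UniqueFactorizationMonoid.irreducible_of_normalized_factor P hPs,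
    UniqueFactorizationMonoid.irreducible_of_normalized_factor Q hQs, hPQ,
    Multiset.count_ne_zero.2 hPs, Multiset.count_ne_zero.2 hQs, ?_⟩
  rw [← hprod]
  exact eq_of_dvd_dvd_zmod2 hM.ne_zero hassoc.symm.dvd hassoc.dvd

theorem stmt2 (A : Polynomial (ZMod 2)) (hM : A.Monic) (hw : omega A = 2) :
    UnitaryPerfect A ↔
      ∃ n : ℕ, A = (X ^ 2 + X) ^ 2 ^ n ∧ A = X ^ 2 ^ n * (X + 1) ^ 2 ^ n := by
  constructor
  · intro h
    obtain ⟨P, Q, a, b, hP, hQ, hPQ, ha, hb, rfl⟩ := exists_eq_pow_mul_pow_of_omega_eq_two hM hw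
    unfold UnitaryPerfect at h
    rw [sigmaStar_two hP hQ hPQ ha hb] at h
    have h1 : P ^ a + Q ^ b = 1 := by linear_combination h - two_eq_zero_zmod2
    obtain ⟨n, rfl, rfl, h2⟩ := eq_two_pow_of_pow_add_pow_eq_one hP hQ a b ha hb h1
    refine ⟨n, ?_⟩
    rcases eq_X_or_of_add_eq_one hP hQ h2 with ⟨rfl, rfl⟩ | ⟨rfl, rfl⟩
    · exact ⟨by rw [← mul_pow]; ring, rfl⟩
    · exact ⟨by rw [← mul_pow]; ring, mul_comm _ _⟩
  · rintro ⟨n, -, rfl⟩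
    have hX1 : Irreducible (X + 1 : Polynomial (ZMod 2)) := by
      simpa [CharTwo.sub_eq_add] using irreducible_X_sub_C (1 : ZMod 2)
    have hn : 2 ^ n ≠ 0 := by positivity
    unfold UnitaryPerfect
    rw [sigmaStar_two irreducible_X hX1 (by simp) hn hn]
    have hfrob : (X + 1 : Polynomial (ZMod 2)) ^ 2 ^ n = X ^ 2 ^ n + 1 := by
      rw [add_pow_char_pow, one_pow]
    rw [hfrob]
    linear_combination (1 + X ^ 2 ^ n) * two_eq_zero_zmod2
end

section
/- Let A = x^{h₁}(x+1)^{k₁}P^l be a unitary perfect polynomial over 𝔽₂, where P is an odd monic irreducible polynomial and h₁, k₁, l are positive integers. Then l = 2^n for some n ∈ ℕ. -/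
/-!
If `P` is irreducible and does not divide `B`, the unitary divisors of `B * P ^ l` are those of `B`
together with their multiples by `P ^ l`, so `1 + P ^ l` divides `σ*(B * P ^ l)`
(`one_add_pow_dvd_sigmaStar`). For a unitary perfect `A = x ^ h₁ (x + 1) ^ k₁ P ^ l` this gives
`1 + P ^ l ∣ A`, hence `1 + P ^ l ∣ x ^ h₁ (x + 1) ^ k₁`, as `1 + P ^ l` is prime to `P`.

Write `l = 2 ^ n * u` with `u` odd. Then `1 + P + ⋯ + P ^ (u - 1)` divides
`1 + P ^ u`, which divides `(1 + P ^ u) ^ (2 ^ n) = 1 + P ^ l`. Since `P(0) = P(1) = 1` and `u` is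
odd, this geometric sum takes the value `1` at `0` and at `1`, so it is prime to both `x` and
`x + 1`. Being a divisor of `x ^ h₁ (x + 1) ^ k₁`, it is a unit, and comparing degrees gives `u = 1`.
-/

open Polynomial
open scoped Classical

/-- The set of unitary divisors of `A`. -/
def unitaryDivisors (A : Polynomial (ZMod 2)) : Set (Polynomial (ZMod 2)) :=
  {d | d.Monic ∧ d ∣ A ∧ IsCoprime d (A / d)}

/-- Division-free description of the unitary divisors. -/
lemma mem_unitaryDivisors {A d : Polynomial (ZMod 2)} :
    d ∈ unitaryDivisors A ↔ d.Monic ∧ ∃ e, A = d * e ∧ IsCoprime d e := by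
  constructor
  · rintro ⟨hd, ⟨e, rfl⟩, hc⟩
    rw [mul_div_cancel_left₀ _ hd.ne_zero] at hc
    exact ⟨hd, e, rfl, hc⟩
  · rintro ⟨hd, e, rfl, hc⟩
    refine ⟨hd, dvd_mul_right _ _, ?_⟩
    rwa [mul_div_cancel_left₀ _ hd.ne_zero]

lemma finite_unitaryDivisors {A : Polynomial (ZMod 2)} (hA : A ≠ 0) :
    (unitaryDivisors A).Finite := by
  have : Finite (degreeLT (ZMod 2) (A.natDegree + 1)) :=
    Finite.of_equiv _ (degreeLTEquiv (ZMod 2) (A.natDegree + 1)).symm.toEquiv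
  refine (Set.toFinite
    (degreeLT (ZMod 2) (A.natDegree + 1) : Set (Polynomial (ZMod 2)))).subset ?_
  rintro d ⟨-, hd, -⟩
  rw [SetLike.mem_coe, mem_degreeLT]
  refine lt_of_le_of_lt degree_le_natDegree ?_
  exact_mod_cast Nat.lt_succ_of_le (natDegree_le_of_dvd hd hA)

lemma unitaryDivisors_mul_pow {B P : Polynomial (ZMod 2)} {l : ℕ} (hP : Irreducible P)
    (hM : P.Monic) (hPB : ¬ P ∣ B) :
    unitaryDivisors (B * P ^ l) =
      unitaryDivisors B ∪ (fun d => P ^ l * d) '' unitaryDivisors B := by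
  have hP0 : P ^ l ≠ 0 := (hM.pow l).ne_zero
  have cop : ∀ d, ¬ P ∣ d → IsCoprime (P ^ l) d := fun d hd =>
    ((hP.coprime_iff_not_dvd).2 hd).pow_left
  ext d
  simp only [Set.mem_union, Set.mem_image, mem_unitaryDivisors]
  constructor
  · rintro ⟨hd, e, he, hc⟩
    by_cases h : P ∣ d
    · have hPe : ¬ P ∣ e := fun h' => hP.not_isUnit (hc.isUnit_of_dvd' h h')
      obtain ⟨d', rfl⟩ : P ^ l ∣ d :=
        (cop e hPe).dvd_of_dvd_mul_right (he ▸ dvd_mul_left _ _)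
      refine Or.inr ⟨d', ⟨(hM.pow l).of_mul_monic_left hd, e, ?_, hc.of_mul_left_right⟩, rfl⟩
      apply mul_left_cancel₀ hP0
      rw [mul_comm, he, mul_assoc]
    · obtain ⟨e', rfl⟩ : P ^ l ∣ e :=
        (cop d h).dvd_of_dvd_mul_left (he ▸ dvd_mul_left _ _)
      refine Or.inl ⟨hd, e', ?_, hc.of_mul_right_right⟩
      apply mul_left_cancel₀ hP0
      rw [mul_comm, he]; ring
  · rintro (⟨hd, e, rfl, hc⟩ | ⟨d, ⟨hd, e, rfl, hc⟩, rfl⟩)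
    · exact ⟨hd, P ^ l * e, by ring,
        (cop d fun h => hPB (h.mul_right e)).symm.mul_right hc⟩
    · exact ⟨(hM.pow l).mul hd, e, by ring,
        (cop e fun h => hPB (h.mul_left d)).mul_left hc⟩

/-- Indeed `σ*(B * P ^ l) = (1 + P ^ l) * σ*(B)`. -/
lemma one_add_pow_dvd_sigmaStar {B P : Polynomial (ZMod 2)} {l : ℕ} (hl : l ≠ 0)
    (hP : Irreducible P) (hM : P.Monic) (hPB : ¬ P ∣ B) :
    1 + P ^ l ∣ sigmaStar (B * P ^ l) := by
  have hB : B ≠ 0 := by rintro rfl; exact hPB (dvd_zero P)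
  have hfin := finite_unitaryDivisors hB
  have hinj : Function.Injective (fun d => P ^ l * d) :=
    mul_right_injective₀ (hM.pow l).ne_zero
  have hdisj : Disjoint (unitaryDivisors B) ((fun d => P ^ l * d) '' unitaryDivisors B) := by
    rw [Set.disjoint_left]
    rintro _ ⟨-, h, -⟩ ⟨d, -, rfl⟩
    exact hPB (((dvd_pow_self P hl).mul_right d).trans h)
  have : sigmaStar (B * P ^ l) = (1 + P ^ l) * ∑ᶠ d ∈ unitaryDivisors B, d := by
    change ∑ᶠ d ∈ unitaryDivisors (B * P ^ l), d = _
    rw [unitaryDivisors_mul_pow hP hM hPB, finsum_mem_union hdisj hfin (hfin.image _),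
      finsum_mem_image hinj.injOn, ← mul_finsum_mem]
    ring
  exact this ▸ dvd_mul_right _ _

/-- A geometric sum with an odd number of terms takes the value `1` wherever `P` does. -/
lemma eval_geom_sum_of_odd {P : Polynomial (ZMod 2)} {u : ℕ} (hu : Odd u) {a : ZMod 2}
    (ha : P.eval a ≠ 0) : (∑ i ∈ Finset.range u, P ^ i).eval a ≠ 0 := by
  have h1 : P.eval a = 1 := Fin.eq_one_of_ne_zero _ ha
  simp [eval_finsetSum, h1, ZMod.natCast_eq_zero_iff_even, hu]

theorem stmt9 (P : Polynomial (ZMod 2)) (hM : P.Monic) (hirr : Irreducible P)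
    (hodd : ¬ X ∣ P ∧ ¬ (X + 1) ∣ P)
    (h₁ k₁ l : ℕ) (hh₁ : 0 < h₁) (hk₁ : 0 < k₁) (hl : 0 < l)
    (hperf : UnitaryPerfect (X ^ h₁ * (X + 1) ^ k₁ * P ^ l)) :
    ∃ n : ℕ, l = 2 ^ n := by
  have hX1 : (X + 1 : Polynomial (ZMod 2)) = X - C 1 := by
    rw [C_1, CharTwo.sub_eq_add]
  have hirrX : Irreducible (X : Polynomial (ZMod 2)) := irreducible_X
  have hirrX1 : Irreducible (X + 1 : Polynomial (ZMod 2)) := hX1 ▸ irreducible_X_sub_C 1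
  have hX (Q : Polynomial (ZMod 2)) : X ∣ Q ↔ Q.eval 0 = 0 := by
    simpa using dvd_iff_isRoot (p := Q) (a := 0)
  have hX' (Q : Polynomial (ZMod 2)) : (X + 1) ∣ Q ↔ Q.eval 1 = 0 := by
    rw [hX1]; exact dvd_iff_isRoot
  have cop (Q : Polynomial (ZMod 2)) (h0 : ¬ X ∣ Q) (h1 : ¬ (X + 1) ∣ Q) :
      IsCoprime Q (X ^ h₁ * (X + 1) ^ k₁) :=
    ((hirrX.coprime_iff_not_dvd).2 h0).symm.pow_right.mul_right
      ((hirrX1.coprime_iff_not_dvd).2 h1).symm.pow_right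
  have hPB : ¬ P ∣ X ^ h₁ * (X + 1) ^ k₁ := fun h =>
    hirr.not_isUnit ((cop P hodd.1 hodd.2).isUnit_of_dvd' dvd_rfl h)
  have hdvd := one_add_pow_dvd_sigmaStar hl.ne' hirr hM hPB
  rw [show sigmaStar _ = _ from hperf] at hdvd
  have hcop : IsCoprime (1 + P ^ l) (P ^ l) := ⟨1, -1, by ring⟩
  replace hdvd := hcop.dvd_of_dvd_mul_right hdvd
  obtain ⟨n, u, hu, rfl⟩ := Nat.exists_eq_two_pow_mul_odd hl.ne'
  have hS : (∑ i ∈ Finset.range u, P ^ i) ∣ 1 + P ^ (2 ^ n * u) := by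
    have hfrob : 1 + P ^ (2 ^ n * u) = (P ^ u - 1) ^ 2 ^ n := by
      rw [sub_pow_char_pow, one_pow, ← pow_mul, mul_comm u, CharTwo.sub_eq_add, add_comm]
    rw [hfrob]
    exact (Dvd.intro _ (geom_sum_mul P u)).trans (dvd_pow_self _ (by positivity))
  have hunit : IsUnit (∑ i ∈ Finset.range u, P ^ i) := by
    refine (cop _ ?_ ?_).isUnit_of_dvd' dvd_rfl (hS.trans hdvd)
    · rw [hX]; exact eval_geom_sum_of_odd hu (mt (hX P).2 hodd.1)
    · rw [hX']; exact eval_geom_sum_of_odd hu (mt (hX' P).2 hodd.2)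
  -- The unit is the quotient of `P ^ u - 1` by `P - 1`, so these have the same degree.
  have hdeg : u * P.natDegree = P.natDegree := by
    have h := congrArg natDegree (geom_sum_mul P u)
    rw [natDegree_mul' (by
        rw [Monic.leadingCoeff (p := P - 1)]
        · simpa using hunit.ne_zero
        · exact hM.sub_of_left (by simpa using natDegree_pos_iff_degree_pos.1 hirr.natDegree_pos)),
      natDegree_eq_zero_of_isUnit hunit, ← C_1, natDegree_sub_C, natDegree_sub_C,
      natDegree_pow] at h
    omega
  have hu1 : u = 1 := Nat.eq_of_mul_eq_mul_right hirr.natDegree_pos (by rw [hdeg, one_mul])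
  exact ⟨n, by rw [hu1, mul_one]⟩
end

section
/- Let r be a positive integer. The polynomial Q(x) = 1 + x + x² + ⋯ + x^(5·2^r) over 𝔽₂ is irreducible if and only if r = 1. -/
open Polynomial

/-!
Put `n = 5 * 2 ^ r + 1`, so that `Q = (X ^ n - 1) / (X - 1)` has degree `n - 1`.
If `Q` is irreducible and `2 ^ k ≡ 1 [MOD n]`, then `Q ∣ X ^ n - 1 ∣ X ^ (2 ^ k) - X`, hence
`n - 1 = deg Q ∣ k`. Taking `k = φ(n)` shows that `n` is prime, so `r ≠ 2` (as `21` is composite).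
If `r ≥ 3`, then `n ≡ 1 [MOD 8]`, so `2` is a square modulo the prime `n`; Euler's criterion
allows `k = (n - 1) / 2`, which contradicts `n - 1 ∣ k`.
For `r = 1`, `Q` is the cyclotomic polynomial of index `11`, which is irreducible over `𝔽₂` because
`2` is a primitive root modulo `11`.
-/

lemma natDegree_geom_sum_zmod_two (m : ℕ) :
    (∑ i ∈ Finset.range (m + 1), X ^ i : Polynomial (ZMod 2)).natDegree = m := by
  have hmul := geom_sum_mul (X : Polynomial (ZMod 2)) (m + 1)
  have hmonic : (∑ i ∈ Finset.range (m + 1), X ^ i : Polynomial (ZMod 2)).Monic :=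
    monic_geom_sum_X m.succ_ne_zero
  have hdeg := congrArg natDegree hmul
  rw [← C_1, hmonic.natDegree_mul (monic_X_sub_C 1), natDegree_X_sub_C,
    natDegree_X_pow_sub_C] at hdeg
  omega

/-- The degree of an irreducible geometric sum of degree `m` divides every exponent `k` with
`2 ^ k ≡ 1` modulo `m + 1`. -/
lemma dvd_of_irreducible_geom_sum {m k : ℕ}
    (h : Irreducible (∑ i ∈ Finset.range (m + 1), X ^ i : Polynomial (ZMod 2)))
    (hk : m + 1 ∣ 2 ^ k - 1) : m ∣ k := by
  have h1 : (∑ i ∈ Finset.range (m + 1), X ^ i : Polynomial (ZMod 2)) ∣ X ^ (m + 1) - 1 :=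
    ⟨X - 1, (geom_sum_mul X (m + 1)).symm⟩
  have h2 : (X ^ (m + 1) - 1 : Polynomial (ZMod 2)) ∣ X ^ (2 ^ k - 1) - 1 := by
    obtain ⟨c, hc⟩ := hk
    rw [hc, pow_mul]
    exact sub_one_dvd_pow_sub_one _ c
  have h3 : (X ^ (2 ^ k - 1) - 1 : Polynomial (ZMod 2)) ∣ X ^ (2 ^ k) - X := by
    refine ⟨X, ?_⟩
    rw [sub_mul, one_mul, ← pow_succ, Nat.sub_add_cancel Nat.one_le_two_pow]
  have h4 := h.natDegree_dvd_of_dvd_X_pow_card_pow_sub_X (n := k)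
    (by simpa using (h1.trans h2).trans h3)
  rwa [natDegree_geom_sum_zmod_two] at h4

lemma not_irreducible_of_two_le {r : ℕ} (hr : 2 ≤ r) :
    ¬ Irreducible (∑ i ∈ Finset.range (5 * 2 ^ r + 1), X ^ i : Polynomial (ZMod 2)) := by
  intro h
  obtain ⟨s, rfl⟩ : ∃ s, r = s + 2 := ⟨r - 2, by omega⟩
  have hs : 0 < 2 ^ s := by positivity
  have hpow : 5 * 2 ^ (s + 2) = 20 * 2 ^ s := by ring
  rw [hpow] at h
  have hcop : Nat.Coprime 2 (20 * 2 ^ s + 1) := by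
    rw [Nat.coprime_two_left]
    exact ⟨10 * 2 ^ s, by ring⟩
  have htot := dvd_of_irreducible_geom_sum h
    ((Nat.modEq_iff_dvd' Nat.one_le_two_pow).1 (Nat.ModEq.pow_totient hcop).symm)
  have hp : (20 * 2 ^ s + 1).Prime := by
    rw [← Nat.totient_eq_iff_prime (by omega)]
    have hle := Nat.le_of_dvd (Nat.totient_pos.2 (by omega)) htot
    have hlt := Nat.totient_lt (20 * 2 ^ s + 1) (by omega)
    omega
  rcases s with _ | t
  · norm_num at hp
  · have : Fact (20 * 2 ^ (t + 1) + 1).Prime := ⟨hp⟩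
    have hne : 20 * 2 ^ (t + 1) + 1 ≠ 2 := by omega
    have hsq : IsSquare (2 : ZMod (20 * 2 ^ (t + 1) + 1)) := by
      rw [ZMod.exists_sq_eq_two_iff hne]
      left
      rw [pow_succ]
      omega
    have h20 : (2 : ZMod (20 * 2 ^ (t + 1) + 1)) ≠ 0 := by
      intro h0
      have hd := (ZMod.natCast_eq_zero_iff 2 (20 * 2 ^ (t + 1) + 1)).1 (by exact_mod_cast h0)
      have := Nat.le_of_dvd (by norm_num) hd
      omega
    have heuler := (ZMod.euler_criterion _ h20).1 hsq
    have hhalf := dvd_of_irreducible_geom_sum h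
      ((Nat.modEq_iff_dvd' Nat.one_le_two_pow).1
        ((ZMod.natCast_eq_natCast_iff _ _ _).1 (by push_cast; exact heuler)).symm)
    have := Nat.le_of_dvd (by omega) hhalf
    omega

lemma irreducible_geom_sum_eleven :
    Irreducible (∑ i ∈ Finset.range 11, X ^ i : Polynomial (ZMod 2)) := by
  have : Fact (Nat.Prime 11) := ⟨by norm_num⟩
  refine ZMod.irreducible_of_dvd_cyclotomic_of_natDegree (n := 11) (by norm_num)
    (by rw [cyclotomic_prime]) ?_
  rw [natDegree_geom_sum_zmod_two 10]
  symm
  -- The order is `10` because `2 ^ 5` and `2 ^ 2` are not `1` modulo `11`.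
  refine orderOf_eq_of_pow_and_pow_div_prime (by norm_num) (by decide) ?_
  intro p hp hpd
  have hmem : p ∈ Nat.primeFactors 10 := Nat.mem_primeFactors.2 ⟨hp, hpd, by norm_num⟩
  rw [show Nat.primeFactors 10 = {2, 5} by decide +kernel] at hmem
  simp only [Finset.mem_insert, Finset.mem_singleton] at hmem
  rcases hmem with rfl | rfl <;> decide

theorem stmt13 (r : ℕ) (hr : 0 < r) :
    Irreducible (∑ i ∈ Finset.range (5 * 2 ^ r + 1), X ^ i : Polynomial (ZMod 2)) ↔
      r = 1 := by
  constructor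
  · intro h
    by_contra hne
    exact not_irreducible_of_two_le (by omega) h
  · rintro rfl
    exact irreducible_geom_sum_eleven
end
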